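/- With the notation of the orthogonal decomposition W = W₁ ⊕ W₂ and a self-dual R-lattice Λ ⊆ W with Λ_i = Λ ∩ W_i, the map sending w₁ + Λ₁ to w₁' + Λ₂, where w₁' ∈ π₂(Λ) is any element such that w₁ + w₁' ∈ Λ, is a well-defined isomorphism of R-modules π₁(Λ)/Λ₁ ≅ π₂(Λ)/Λ₂. -/

import Mathlib

/-- Two surjections from a module with the same kernel have canonically isomorphic targets. -/
theorem LinearMap.exists_linearEquiv_of_ker_eq {R M A B : Type*} [Ring R]
    [AddCommGroup M] [Module R M] [AddCommGroup A] [Module R A] [AddCommGroup B] [Module R B]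
    (f : M →ₗ[R] A) (g : M →ₗ[R] B) (hf : Function.Surjective f) (hg : Function.Surjective g)
    (h : LinearMap.ker f = LinearMap.ker g) :
    ∃ e : A ≃ₗ[R] B, ∀ m, e (f m) = g m := by
  refine ⟨(f.quotKerEquivOfSurjective hf).symm ≪≫ₗ Submodule.quotEquivOfEq _ _ h ≪≫ₗ
    g.quotKerEquivOfSurjective hg, fun m => ?_⟩
  have hm : (f.quotKerEquivOfSurjective hf).symm (f m) = Submodule.Quotient.mk m :=
    (LinearEquiv.symm_apply_eq _).2 rfl
  simp only [LinearEquiv.trans_apply, hm]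
  rfl

/-- The images of a submodule `Λ` under two complementary projections, modulo their intersections
with `Λ`, are isomorphic: `p₁ l` corresponds to `p₂ l` for `l ∈ Λ`. -/
theorem Submodule.exists_map_quotient_equiv {R W : Type*} [Ring R] [AddCommGroup W] [Module R W]
    (p₁ p₂ : W →ₗ[R] W) (hp : ∀ w, p₁ w + p₂ w = w) (Λ : Submodule R W) :
    ∃ e : (Λ.map p₁ ⧸ Λ.comap (Λ.map p₁).subtype) ≃ₗ[R] (Λ.map p₂ ⧸ Λ.comap (Λ.map p₂).subtype),
      ∀ (l : W) (hl : l ∈ Λ),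
        e (Submodule.Quotient.mk ⟨p₁ l, Submodule.mem_map_of_mem hl⟩) =
          Submodule.Quotient.mk ⟨p₂ l, Submodule.mem_map_of_mem hl⟩ := by
  have hsurj : ∀ p : W →ₗ[R] W, Function.Surjective
      ((Λ.comap (Λ.map p).subtype).mkQ ∘ₗ p.submoduleMap Λ) := fun p =>
    (Submodule.mkQ_surjective _).comp (p.submoduleMap_surjective Λ)
  have hker : ∀ (p : W →ₗ[R] W) (l : Λ),
      l ∈ LinearMap.ker ((Λ.comap (Λ.map p).subtype).mkQ ∘ₗ p.submoduleMap Λ) ↔ p l ∈ Λ := by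
    intro p l
    simp
  obtain ⟨e, he⟩ := LinearMap.exists_linearEquiv_of_ker_eq _ _ (hsurj p₁) (hsurj p₂) (by
    ext l
    rw [hker, hker]
    have hl : p₁ l + p₂ l ∈ Λ := (hp l).symm ▸ l.2
    exact ⟨fun h => (Submodule.add_mem_iff_right _ h).1 hl,
      fun h => (Submodule.add_mem_iff_left _ h).1 hl⟩)
  exact ⟨e, fun l hl => he ⟨l, hl⟩⟩

/-- For a self-dual lattice Λ in W = W₁ ⊥ W₂, the map w₁ + Λ₁ ↦ w₁' + Λ₂
(where w₁ + w₁' ∈ Λ) is a well-defined R-module isomorphism π₁(Λ)/Λ₁ ≅ π₂(Λ)/Λ₂. -/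
theorem stmt_1
    {R K W : Type*} [CommRing R] [IsDomain R] [IsPrincipalIdealRing R]
    (hchar : (2 : R) ≠ 0)
    [Field K] [Algebra R K] [IsFractionRing R K]
    [AddCommGroup W] [Module K W] [FiniteDimensional K W]
    [Module R W] [IsScalarTower R K W]
    (Q : QuadraticForm K W)
    (hnd : ∀ w : W, (∀ x : W, QuadraticMap.polar (⇑Q) w x = 0) → w = 0)
    (W₁ W₂ : Submodule K W) (hc : IsCompl W₁ W₂)
    (horth : ∀ x ∈ W₁, ∀ y ∈ W₂, QuadraticMap.polar (⇑Q) x y = 0)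
    (Λ : Submodule R W) (hfg : Λ.FG)
    (hrank : Submodule.span K (Λ : Set W) = ⊤)
    (hself : (Λ : Set W) =
      {w : W | ∀ l ∈ Λ, QuadraticMap.polar (⇑Q) w l ∈ Set.range (algebraMap R K)}) :
    let π₁ : W →ₗ[R] W := (W₁.subtype ∘ₗ Submodule.linearProjOfIsCompl W₁ W₂ hc).restrictScalars R
    let π₂ : W →ₗ[R] W :=
      (W₂.subtype ∘ₗ Submodule.linearProjOfIsCompl W₂ W₁ hc.symm).restrictScalars R
    let N₁ : Submodule R W := Submodule.map π₁ Λ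
    let N₂ : Submodule R W := Submodule.map π₂ Λ
    let L₁ : Submodule R N₁ := Submodule.comap N₁.subtype (Λ ⊓ Submodule.restrictScalars R W₁)
    let L₂ : Submodule R N₂ := Submodule.comap N₂.subtype (Λ ⊓ Submodule.restrictScalars R W₂)
    ∃ e : (N₁ ⧸ L₁) ≃ₗ[R] (N₂ ⧸ L₂),
      ∀ (w₁ w₂ : W) (h₁ : w₁ ∈ N₁) (h₂ : w₂ ∈ N₂),
        w₁ + w₂ ∈ Λ →
          e (Submodule.Quotient.mk ⟨w₁, h₁⟩) = Submodule.Quotient.mk ⟨w₂, h₂⟩ := by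
  intro π₁ π₂ N₁ N₂ L₁ L₂
  have hp : ∀ w, π₁ w + π₂ w = w := fun w =>
    Submodule.projection_add_projection_eq_self hc w
  have mem₁ : ∀ w ∈ N₁, w ∈ W₁ := by
    rintro _ ⟨l, -, rfl⟩
    exact (Submodule.projectionOnto W₁ W₂ hc l).2
  have mem₂ : ∀ w ∈ N₂, w ∈ W₂ := by
    rintro _ ⟨l, -, rfl⟩
    exact (Submodule.projectionOnto W₂ W₁ hc.symm l).2
  have hL₁ : L₁ = Λ.comap N₁.subtype := by
    ext w
    exact ⟨fun h => h.1, fun h => ⟨h, mem₁ _ w.2⟩⟩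
  have hL₂ : L₂ = Λ.comap N₂.subtype := by
    ext w
    exact ⟨fun h => h.1, fun h => ⟨h, mem₂ _ w.2⟩⟩
  clear_value L₁ L₂
  subst hL₁ hL₂
  obtain ⟨e, he⟩ := Submodule.exists_map_quotient_equiv π₁ π₂ hp Λ
  refine ⟨e, fun w₁ w₂ h₁ h₂ hw => ?_⟩
  have e₁ : π₁ (w₁ + w₂) = w₁ := by
    have l₁ : π₁ w₁ = w₁ :=
      congrArg Subtype.val (Submodule.projectionOnto_apply_left hc ⟨w₁, mem₁ _ h₁⟩)
    have l₂ : π₁ w₂ = 0 :=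
      congrArg Subtype.val ((Submodule.projectionOnto_apply_eq_zero_iff hc).2 (mem₂ _ h₂))
    rw [map_add, l₁, l₂, add_zero]
  have e₂ : π₂ (w₁ + w₂) = w₂ := add_left_cancel ((congrArg (· + _) e₁.symm).trans (hp _))
  have key := he (w₁ + w₂) hw
  simp only [e₁, e₂] at key
  exact key
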